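/- There exists an absolute constant C > 0 for which the following holds. Let β₁ ≥ β₂ ≥ … ≥ β_d > 0, let Ψ be the associated SLOPE norm on ℝ^d, let G be a standard Gaussian vector in ℝ^d, and let ρ, r > 0. Then for every k ∈ {1, …, d}, E sup{ ⟨G, w⟩ : Ψ(w) ≤ ρ, ‖w‖₂ ≤ r } ≤ C·( r·√((k−1)·log(ed/(k−1))) + ρ·max_{k ≤ i ≤ d} √(log(ed/i))/β_i ), where for k = 1 the first term is taken to be 0. -/

import Mathlib

open MeasureTheory ProbabilityTheory

/-- The Euclidean (`ℓ₂`) norm on `ℝ^d`. -/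
noncomputable def l2norm {d : ℕ} (t : Fin d → ℝ) : ℝ := Real.sqrt (∑ i, (t i) ^ 2)

/-- The standard inner product on `ℝ^d`. -/
noncomputable def iprod {d : ℕ} (x y : Fin d → ℝ) : ℝ := ∑ i, x i * y i

/-- The nonincreasing rearrangement of `(|t_i|)_{i=1}^d`. -/
noncomputable def sharpOrd {d : ℕ} (t : Fin d → ℝ) : Fin d → ℝ :=
  fun i => |t (Tuple.sort (fun j => |t j|) i.rev)|

/-- The SLOPE norm `Ψ(t) = ∑ β_i t_i^♯` associated with weights `β`. -/
noncomputable def slopeNorm {d : ℕ} (β t : Fin d → ℝ) : ℝ := ∑ i, β i * sharpOrd t i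

/-!
The proof is deterministic up to one scalar random variable. Sorting both vectors, `⟨x, w⟩` is at
most `∑ i, x_i^♯ w_i^♯`, and Markov's inequality for counting shows that the `i`-th largest entry of
`x` satisfies `x_i^♯ ≤ T √(log (e d / i) / t)` simultaneously for all `i`, where `T` is the average
of `exp (t x_j ^ 2)`. Cauchy–Schwarz on the `k - 1` largest entries uses only `‖w‖₂ ≤ r`, the
definition of the maximum on the others uses only `Ψ(w) ≤ ρ`, and finally `𝔼 T ≤ √2` for `t = 1/4`.
-/

open scoped NNReal

section Rearrangement

variable {d : ℕ}

theorem sharpOrd_antitone (t : Fin d → ℝ) : Antitone (sharpOrd t) := fun _ _ hij =>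
  Tuple.monotone_sort (fun j => |t j|) (Fin.rev_le_rev.mpr hij)

theorem sharpOrd_nonneg (t : Fin d → ℝ) (i : Fin d) : 0 ≤ sharpOrd t i := abs_nonneg _

theorem sharpOrd_zero : sharpOrd (0 : Fin d → ℝ) = 0 := funext fun _ => abs_zero

/-- A permutation `σ` with `t_i^♯ = |t_{σ i}|`; ties are broken as in `Tuple.sort`. It transports
sums over `t^♯` to sums over `|t|`. -/
noncomputable def sharpPerm (t : Fin d → ℝ) : Equiv.Perm (Fin d) :=
  Fin.revPerm.trans (Tuple.sort fun j => |t j|)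

theorem abs_apply_sharpPerm (t : Fin d → ℝ) (i : Fin d) : |t (sharpPerm t i)| = sharpOrd t i := rfl

theorem sum_comp_sharpOrd {M : Type*} [AddCommMonoid M] (t : Fin d → ℝ) (φ : ℝ → M) :
    ∑ i, φ (sharpOrd t i) = ∑ i, φ |t i| :=
  Equiv.sum_comp (sharpPerm t) fun i => φ |t i|

theorem iprod_le_sum_sharpOrd_mul_sharpOrd (x y : Fin d → ℝ) :
    iprod x y ≤ ∑ i, sharpOrd x i * sharpOrd y i := by
  have hmono : Monovary (sharpOrd x) (sharpOrd y) :=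
    (sharpOrd_antitone x).monovary (sharpOrd_antitone y)
  calc iprod x y ≤ ∑ i, |x i| * |y i| :=
        Finset.sum_le_sum fun i _ => (le_abs_self _).trans_eq (abs_mul _ _)
    _ = ∑ i, |x (sharpPerm x i)| * |y (sharpPerm x i)| :=
        (Equiv.sum_comp (sharpPerm x) fun i => |x i| * |y i|).symm
    _ = ∑ i, sharpOrd x i * sharpOrd y (((sharpPerm x).trans (sharpPerm y).symm) i) := by
        simp [← abs_apply_sharpPerm]
    _ ≤ ∑ i, sharpOrd x i * sharpOrd y i := hmono.sum_mul_comp_perm_le_sum_mul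

theorem succ_mul_comp_sharpOrd_le_sum {φ : ℝ → ℝ} (hφ : MonotoneOn φ (Set.Ici 0))
    (hφ₀ : ∀ s, 0 ≤ s → 0 ≤ φ s) (x : Fin d → ℝ) (i : Fin d) :
    ((i : ℝ) + 1) * φ (sharpOrd x i) ≤ ∑ j, φ |x j| := by
  calc ((i : ℝ) + 1) * φ (sharpOrd x i) = ∑ _j ∈ Finset.Iic i, φ (sharpOrd x i) := by simp
    _ ≤ ∑ j ∈ Finset.Iic i, φ (sharpOrd x j) := Finset.sum_le_sum fun j hj =>
        hφ (sharpOrd_nonneg x i) (sharpOrd_nonneg x j) (sharpOrd_antitone x (Finset.mem_Iic.mp hj))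
    _ ≤ ∑ j, φ (sharpOrd x j) :=
        Finset.sum_le_univ_sum_of_nonneg fun j => hφ₀ _ (sharpOrd_nonneg x j)
    _ = ∑ j, φ |x j| := sum_comp_sharpOrd x φ

end Rearrangement

section LogRatio

/-- The quantity `log (e d / s)` governing the size of the `s`-th largest of `d` Gaussian variables.
Both arguments are real, and the value at `s = 0` is the junk value `0`. -/
noncomputable def logRatio (d s : ℝ) : ℝ := Real.log (Real.exp 1 * d / s)

variable {d s : ℝ}

theorem logRatio_eq_one_add_log (hd : 0 < d) (hs : 0 < s) :
    logRatio d s = 1 + Real.log (d / s) := by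
  rw [logRatio, mul_div_assoc, Real.log_mul (Real.exp_ne_zero 1) (by positivity), Real.log_exp]

theorem one_le_logRatio (hs : 0 < s) (hsd : s ≤ d) : 1 ≤ logRatio d s := by
  rw [logRatio_eq_one_add_log (hs.trans_le hsd) hs]
  exact le_add_of_nonneg_right (Real.log_nonneg ((one_le_div hs).mpr hsd))

theorem one_le_logRatio_succ {d : ℕ} (i : Fin d) : 1 ≤ logRatio d (i + 1) :=
  one_le_logRatio (by positivity) (by exact_mod_cast i.isLt)

theorem natCast_mul_log_sub_self_le_log_factorial (m : ℕ) :
    m * Real.log m - m ≤ Real.log m.factorial := by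
  rcases eq_or_ne m 0 with rfl | hm
  · simp
  have hstirling := Stirling.le_log_factorial_stirling hm
  have hlogm : 0 ≤ Real.log m := Real.log_natCast_nonneg m
  have hlogpi : 0 ≤ Real.log (2 * Real.pi) := Real.log_nonneg (by linarith [Real.pi_gt_three])
  linarith

theorem sum_range_logRatio_succ_le {m : ℕ} (hmd : m ≤ d) :
    ∑ i ∈ Finset.range m, logRatio d (i + 1) ≤ 2 * (m * logRatio d m) := by
  rcases m.eq_zero_or_pos with rfl | hm
  · simp
  have hm' : (0 : ℝ) < m := by exact_mod_cast hm
  have hed : Real.exp 1 * d ≠ 0 := mul_ne_zero (Real.exp_ne_zero 1) (hm'.trans_le hmd).ne'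
  have hfactorial : ∑ i ∈ Finset.range m, Real.log ((i : ℝ) + 1) = Real.log m.factorial := by
    rw [← Finset.prod_range_add_one_eq_factorial, Nat.cast_prod, Real.log_prod fun i _ => by
      positivity]
    simp
  calc ∑ i ∈ Finset.range m, logRatio d (i + 1)
      = m * Real.log (Real.exp 1 * d) - Real.log m.factorial := by
        simp only [logRatio]
        rw [Finset.sum_congr rfl fun i _ => Real.log_div hed (by positivity),
          Finset.sum_sub_distrib, hfactorial]
        simp
    _ ≤ m * logRatio d m + m := by
        rw [logRatio, Real.log_div hed hm'.ne']
        linarith [natCast_mul_log_sub_self_le_log_factorial m]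
    _ ≤ 2 * (m * logRatio d m) := by
        linarith [le_mul_of_one_le_right hm'.le (one_le_logRatio hm' hmd)]

theorem sum_filter_lt_logRatio_succ_le {d m : ℕ} (hmd : m ≤ d) :
    ∑ i : Fin d with i.val < m, logRatio d (i + 1) ≤ 2 * (m * logRatio d m) := by
  refine (Eq.le ?_).trans (sum_range_logRatio_succ_le (by exact_mod_cast hmd))
  rw [Finset.sum_filter,
    Fin.sum_univ_eq_sum_range (fun i => if i < m then logRatio d (i + 1) else 0) d,
    ← Finset.sum_filter]
  congr 1
  grind

end LogRatio

section OrderStatistics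

variable {d : ℕ} {t : ℝ}

/-- The empirical mean of `exp (t x_j ^ 2)`, a single number that controls all order statistics of
`x` at once. It is the junk value `0` for `d = 0`. -/
noncomputable def meanExpSq (t : ℝ) (x : Fin d → ℝ) : ℝ := (∑ j, Real.exp (t * x j ^ 2)) / d

theorem meanExpSq_nonneg (t : ℝ) (x : Fin d → ℝ) : 0 ≤ meanExpSq t x := by
  unfold meanExpSq
  positivity

theorem one_le_meanExpSq (hd : 0 < d) (ht : 0 ≤ t) (x : Fin d → ℝ) : 1 ≤ meanExpSq t x := by
  rw [meanExpSq, one_le_div (by exact_mod_cast hd)]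
  calc (d : ℝ) = ∑ _j : Fin d, (1 : ℝ) := by simp
    _ ≤ _ := Finset.sum_le_sum fun j _ => Real.one_le_exp (by positivity)

theorem exp_mul_sharpOrd_sq_le (ht : 0 ≤ t) (x : Fin d → ℝ) (i : Fin d) :
    Real.exp (t * sharpOrd x i ^ 2) ≤ d / (i + 1) * meanExpSq t x := by
  have hd : (d : ℝ) ≠ 0 := by exact_mod_cast i.pos.ne'
  have hmono : MonotoneOn (fun s : ℝ => Real.exp (t * s ^ 2)) (Set.Ici 0) :=
    fun a (ha : 0 ≤ a) b _ hab => by dsimp only; gcongr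
  have hmarkov := succ_mul_comp_sharpOrd_le_sum hmono (fun s _ => (Real.exp_pos _).le) x i
  simp only [sq_abs] at hmarkov
  rw [meanExpSq, div_mul_div_comm, mul_comm (d : ℝ), mul_div_mul_right _ _ hd,
    le_div_iff₀' (by positivity)]
  exact hmarkov

theorem mul_sharpOrd_sq_le (ht : 0 ≤ t) (x : Fin d → ℝ) (i : Fin d) :
    t * sharpOrd x i ^ 2 ≤ meanExpSq t x * logRatio d (i + 1) := by
  have hd : (0 : ℝ) < d := by exact_mod_cast i.pos
  have hT : 1 ≤ meanExpSq t x := one_le_meanExpSq i.pos ht x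
  have hL : 1 ≤ logRatio d (i + 1) := one_le_logRatio_succ i
  calc t * sharpOrd x i ^ 2
      ≤ Real.log (d / (i + 1) * meanExpSq t x) :=
        (Real.le_log_iff_exp_le (by positivity)).mpr (exp_mul_sharpOrd_sq_le ht x i)
    _ = logRatio d (i + 1) - 1 + Real.log (meanExpSq t x) := by
        rw [Real.log_mul (by positivity) (by positivity),
          logRatio_eq_one_add_log hd (by positivity), add_sub_cancel_left]
    _ ≤ logRatio d (i + 1) - 1 + (meanExpSq t x - 1) := by
        gcongr
        exact Real.log_le_sub_one_of_pos (by linarith)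
    _ ≤ meanExpSq t x * logRatio d (i + 1) := by
        linarith [mul_nonneg (sub_nonneg.mpr hT) (sub_nonneg.mpr hL)]

theorem sharpOrd_le_meanExpSq_div_sqrt_mul (ht : 0 < t) (x : Fin d → ℝ) (i : Fin d) :
    sharpOrd x i ≤ meanExpSq t x / √t * √(logRatio d (i + 1)) := by
  have hT : 1 ≤ meanExpSq t x := one_le_meanExpSq i.pos ht.le x
  have hL : 1 ≤ logRatio d (i + 1) := one_le_logRatio_succ i
  refine le_of_sq_le_sq ?_ (by positivity)
  rw [mul_pow, div_pow, Real.sq_sqrt ht.le, Real.sq_sqrt (by linarith), div_mul_eq_mul_div,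
    le_div_iff₀' ht]
  calc t * sharpOrd x i ^ 2 ≤ meanExpSq t x * logRatio d (i + 1) := mul_sharpOrd_sq_le ht.le x i
    _ ≤ meanExpSq t x ^ 2 * logRatio d (i + 1) := by
        gcongr
        exact le_self_pow₀ hT two_ne_zero

end OrderStatistics

section SlopeWidth

variable {d : ℕ} {β : Fin d → ℝ} {ρ r : ℝ}

/-- The support function at `x` of the intersection of the SLOPE ball of radius `ρ` with the
Euclidean ball of radius `r`. An empty intersection gives the
junk value `0`. -/
noncomputable def slopeWidth (β : Fin d → ℝ) (ρ r : ℝ) (x : Fin d → ℝ) : ℝ :=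
  sSup ((fun w => iprod x w) '' {w | slopeNorm β w ≤ ρ ∧ l2norm w ≤ r})

theorem slopeWidth_nonneg (β : Fin d → ℝ) (hρ : 0 ≤ ρ) (hr : 0 ≤ r) (x : Fin d → ℝ) :
    0 ≤ slopeWidth β ρ r x := by
  refine Real.sSup_nonneg' ⟨0, ⟨0, ⟨?_, ?_⟩, ?_⟩, le_rfl⟩
  · simpa [slopeNorm, sharpOrd_zero] using hρ
  · simpa [l2norm] using hr
  · simp [iprod]

theorem sum_mul_sharpOrd_le_sqrt_mul_l2norm (s : Finset (Fin d)) (a w : Fin d → ℝ) :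
    ∑ i ∈ s, a i * sharpOrd w i ≤ √(∑ i ∈ s, a i ^ 2) * l2norm w := by
  have hnorm : ∑ i ∈ s, sharpOrd w i ^ 2 ≤ ∑ i, w i ^ 2 := by
    refine (Finset.sum_le_univ_sum_of_nonneg fun i => sq_nonneg _).trans_eq ?_
    rw [sum_comp_sharpOrd w fun u => u ^ 2]
    simp only [sq_abs]
  refine (Real.sum_mul_le_sqrt_mul_sqrt s a (sharpOrd w)).trans ?_
  unfold l2norm
  gcongr

theorem sum_mul_sharpOrd_le_mul_slopeNorm (hβ : ∀ i, 0 ≤ β i) {M : ℝ} (hM : 0 ≤ M)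
    {s : Finset (Fin d)} {a : Fin d → ℝ} (ha : ∀ i ∈ s, a i ≤ M * β i) (w : Fin d → ℝ) :
    ∑ i ∈ s, a i * sharpOrd w i ≤ M * slopeNorm β w := by
  calc ∑ i ∈ s, a i * sharpOrd w i ≤ ∑ i ∈ s, M * β i * sharpOrd w i :=
        Finset.sum_le_sum fun i hi => mul_le_mul_of_nonneg_right (ha i hi) (sharpOrd_nonneg w i)
    _ ≤ ∑ i, M * β i * sharpOrd w i := Finset.sum_le_univ_sum_of_nonneg fun i =>
        mul_nonneg (mul_nonneg hM (hβ i)) (sharpOrd_nonneg w i)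
    _ = M * slopeNorm β w := by simp only [slopeNorm, Finset.mul_sum, mul_assoc]

theorem slopeWidth_le_of_sharpOrd_le (hβ : ∀ i, 0 ≤ β i) (hρ : 0 ≤ ρ) (hr : 0 ≤ r) {K M : ℝ}
    (hK : 0 ≤ K) (hM : 0 ≤ M) {s : Finset (Fin d)} {a : Fin d → ℝ} (ha : ∀ i ∉ s, a i ≤ M * β i)
    {x : Fin d → ℝ} (hx : ∀ i, sharpOrd x i ≤ K * a i) :
    slopeWidth β ρ r x ≤ K * (√(∑ i ∈ s, a i ^ 2) * r + M * ρ) := by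
  refine Real.sSup_le ?_ (by positivity)
  rintro _ ⟨w, ⟨hΨ, hw⟩, rfl⟩
  calc iprod x w ≤ ∑ i, sharpOrd x i * sharpOrd w i := iprod_le_sum_sharpOrd_mul_sharpOrd x w
    _ ≤ ∑ i, K * a i * sharpOrd w i := Finset.sum_le_sum fun i _ =>
        mul_le_mul_of_nonneg_right (hx i) (sharpOrd_nonneg w i)
    _ = K * (∑ i ∈ s, a i * sharpOrd w i + ∑ i ∈ sᶜ, a i * sharpOrd w i) := by
        simp only [mul_assoc, ← Finset.mul_sum, Finset.sum_add_sum_compl]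
    _ ≤ K * (√(∑ i ∈ s, a i ^ 2) * l2norm w + M * slopeNorm β w) := by
        gcongr
        · exact sum_mul_sharpOrd_le_sqrt_mul_l2norm s a w
        · exact sum_mul_sharpOrd_le_mul_slopeNorm hβ hM
            (fun i hi => ha i (Finset.mem_compl.mp hi)) w
    _ ≤ K * (√(∑ i ∈ s, a i ^ 2) * r + M * ρ) := by gcongr

theorem slopeWidth_le_meanExpSq_mul (hβ : ∀ i, 0 ≤ β i) (hρ : 0 ≤ ρ) (hr : 0 ≤ r) {t M : ℝ}
    (ht : 0 < t) (hM : 0 ≤ M) {m : ℕ} (hmd : m ≤ d)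
    (hβM : ∀ i : Fin d, m ≤ i → √(logRatio d (i + 1)) ≤ M * β i) (x : Fin d → ℝ) :
    slopeWidth β ρ r x ≤ meanExpSq t x / √t * (√2 * (r * √(m * logRatio d m) + ρ * M)) := by
  have hT : 0 ≤ meanExpSq t x := meanExpSq_nonneg t x
  have hhead : √(∑ i : Fin d with i.val < m, √(logRatio d (i + 1)) ^ 2) ≤
      √2 * √(m * logRatio d m) := by
    rw [← Real.sqrt_mul zero_le_two]
    refine Real.sqrt_le_sqrt ((Eq.le ?_).trans (sum_filter_lt_logRatio_succ_le hmd))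
    exact Finset.sum_congr rfl fun i _ => Real.sq_sqrt (zero_le_one.trans (one_le_logRatio_succ i))
  calc slopeWidth β ρ r x
      ≤ meanExpSq t x / √t *
          (√(∑ i : Fin d with i.val < m, √(logRatio d (i + 1)) ^ 2) * r + M * ρ) :=
        slopeWidth_le_of_sharpOrd_le hβ hρ hr (by positivity) hM
          (fun i hi => hβM i (by simpa using hi)) (sharpOrd_le_meanExpSq_div_sqrt_mul ht x)
    _ ≤ meanExpSq t x / √t * (√2 * √(m * logRatio d m) * r + √2 * (M * ρ)) := by
        refine mul_le_mul_of_nonneg_left (add_le_add ?_ ?_) (by positivity)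
        · exact mul_le_mul_of_nonneg_right hhead hr
        · exact le_mul_of_one_le_left (by positivity) Real.one_lt_sqrt_two.le
    _ = meanExpSq t x / √t * (√2 * (r * √(m * logRatio d m) + ρ * M)) := by ring

end SlopeWidth

section Subgaussian

theorem integral_exp_mul_sq_gaussianReal {t : ℝ} (ht : t < 1 / 2) :
    ∫ x, Real.exp (t * x ^ 2) ∂gaussianReal 0 1 = (√(1 - 2 * t))⁻¹ := by
  have hpdf (x : ℝ) : gaussianPDFReal 0 1 x • Real.exp (t * x ^ 2) =
      (√(2 * Real.pi))⁻¹ * Real.exp (-(1 / 2 - t) * x ^ 2) := by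
    rw [gaussianPDFReal_def, smul_eq_mul, mul_assoc, ← Real.exp_add]
    simp only [NNReal.coe_one, mul_one, sub_zero]
    ring_nf
  rw [integral_gaussianReal_eq_integral_smul one_ne_zero]
  simp_rw [hpdf]
  rw [integral_const_mul, integral_gaussian, ← Real.sqrt_inv, ← Real.sqrt_mul (by positivity),
    ← Real.sqrt_inv]
  congr 1
  have : 1 - 2 * t ≠ 0 := by linarith
  have : 1 / 2 - t ≠ 0 := by linarith
  field_simp

theorem lintegral_exp_mul_sq_gaussianReal {t : ℝ} (ht : t < 1 / 2) :
    ∫⁻ x, ENNReal.ofReal (Real.exp (t * x ^ 2)) ∂gaussianReal 0 1 =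
      ENNReal.ofReal (√(1 - 2 * t))⁻¹ := by
  have hpos : 0 < (√(1 - 2 * t))⁻¹ := inv_pos.mpr (Real.sqrt_pos.mpr (by linarith))
  rw [← integral_exp_mul_sq_gaussianReal ht, ofReal_integral_eq_lintegral_ofReal]
  · exact .of_integral_ne_zero (by rw [integral_exp_mul_sq_gaussianReal ht]; exact hpos.ne')
  · exact .of_forall fun x => (Real.exp_pos _).le

theorem lintegral_exp_mul_gaussianReal (y : ℝ) :
    ∫⁻ g, ENNReal.ofReal (Real.exp (y * g)) ∂gaussianReal 0 1 =
      ENNReal.ofReal (Real.exp (y ^ 2 / 2)) := by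
  rw [← ofReal_integral_eq_lintegral_ofReal (integrable_exp_mul_gaussianReal y)
    (.of_forall fun g => (Real.exp_pos _).le)]
  congr 1
  simpa [mgf] using congrFun (mgf_id_gaussianReal (μ := 0) (v := 1)) y

variable {Ω : Type*} [MeasurableSpace Ω] {P : Measure Ω} {X : Ω → ℝ}

theorem hasSubgaussianMGF_of_map_eq_gaussianReal {v : ℝ≥0} (hX : AEMeasurable X P)
    (hmap : P.map X = gaussianReal 0 v) : HasSubgaussianMGF X v P where
  integrable_exp_mul u := by
    have h := integrable_exp_mul_gaussianReal (μ := 0) (v := v) u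
    rw [← hmap] at h
    exact h.comp_aemeasurable hX
  mgf_le u := by simp [mgf_gaussianReal hmap]

variable {c : ℝ≥0} {t : ℝ}

theorem isFiniteMeasure_of_hasSubgaussianMGF (hX : HasSubgaussianMGF X c P) :
    IsFiniteMeasure P := by
  simpa [integrable_const_iff] using hX.integrable_exp_mul 0

theorem lintegral_exp_mul_sq_le_of_hasSubgaussianMGF (hX : HasSubgaussianMGF X c P) (ht : 0 ≤ t)
    (hct : c * t < 1 / 2) :
    ∫⁻ ω, ENNReal.ofReal (Real.exp (t * X ω ^ 2)) ∂P ≤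
      ENNReal.ofReal (√(1 - 2 * (c * t)))⁻¹ := by
  have : IsFiniteMeasure P := isFiniteMeasure_of_hasSubgaussianMGF hX
  have hmeas : AEMeasurable X P := hX.aemeasurable
  have hmgf (u : ℝ) : ∫⁻ ω, ENNReal.ofReal (Real.exp (u * X ω)) ∂P ≤
      ENNReal.ofReal (Real.exp (c * u ^ 2 / 2)) := by
    rw [← ofReal_integral_eq_lintegral_ofReal (hX.integrable_exp_mul u)
      (.of_forall fun ω => (Real.exp_pos _).le)]
    exact ENNReal.ofReal_le_ofReal (hX.mgf_le u)
  -- Writing `exp (t X ^ 2)` as the Gaussian average of `exp (√(2 t) g X)` and exchanging the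
  -- integrals reduces the claim to the moment generating function of `X`.
  calc ∫⁻ ω, ENNReal.ofReal (Real.exp (t * X ω ^ 2)) ∂P
      = ∫⁻ ω, ∫⁻ g, ENNReal.ofReal (Real.exp (√(2 * t) * X ω * g)) ∂gaussianReal 0 1 ∂P := by
        refine lintegral_congr fun ω => ?_
        rw [lintegral_exp_mul_gaussianReal, mul_pow, Real.sq_sqrt (mul_nonneg zero_le_two ht),
          mul_assoc, mul_div_cancel_left₀ _ two_ne_zero]
    _ = ∫⁻ g, ∫⁻ ω, ENNReal.ofReal (Real.exp (√(2 * t) * X ω * g)) ∂P ∂gaussianReal 0 1 := by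
        refine lintegral_lintegral_swap (AEMeasurable.ennreal_ofReal ?_)
        exact ((hmeas.comp_fst.const_mul _).mul measurable_snd.aemeasurable).exp
    _ ≤ ∫⁻ g, ENNReal.ofReal (Real.exp (c * t * g ^ 2)) ∂gaussianReal 0 1 := by
        refine lintegral_mono fun g => ?_
        convert hmgf (√(2 * t) * g) using 3
        · ring_nf
        · rw [mul_pow, Real.sq_sqrt (mul_nonneg zero_le_two ht)]
          ring_nf
    _ = ENNReal.ofReal (√(1 - 2 * (c * t)))⁻¹ := lintegral_exp_mul_sq_gaussianReal hct

theorem integrable_exp_mul_sq_of_hasSubgaussianMGF (hX : HasSubgaussianMGF X c P) (ht : 0 ≤ t)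
    (hct : c * t < 1 / 2) : Integrable (fun ω => Real.exp (t * X ω ^ 2)) P := by
  have hmeas : AEMeasurable X P := hX.aemeasurable
  refine (lintegral_ofReal_ne_top_iff_integrable (by fun_prop)
    (.of_forall fun ω => (Real.exp_pos _).le)).mp ?_
  exact ne_top_of_le_ne_top ENNReal.ofReal_ne_top
    (lintegral_exp_mul_sq_le_of_hasSubgaussianMGF hX ht hct)

theorem integral_exp_mul_sq_le_of_hasSubgaussianMGF (hX : HasSubgaussianMGF X c P) (ht : 0 ≤ t)
    (hct : c * t < 1 / 2) :
    ∫ ω, Real.exp (t * X ω ^ 2) ∂P ≤ (√(1 - 2 * (c * t)))⁻¹ := by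
  rw [← ENNReal.ofReal_le_ofReal_iff (by positivity), ofReal_integral_eq_lintegral_ofReal
    (integrable_exp_mul_sq_of_hasSubgaussianMGF hX ht hct)
    (.of_forall fun ω => (Real.exp_pos _).le)]
  exact lintegral_exp_mul_sq_le_of_hasSubgaussianMGF hX ht hct

end Subgaussian

section SubgaussianVector

variable {d : ℕ} {Ω : Type*} [MeasurableSpace Ω] {P : Measure Ω} {G : Ω → Fin d → ℝ}

theorem hasSubgaussianMGF_apply_of_map_eq_pi_gaussianReal {v : Fin d → ℝ≥0} (hG : Measurable G)
    (hmap : P.map G = Measure.pi fun j => gaussianReal 0 (v j)) (j : Fin d) :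
    HasSubgaussianMGF (fun ω => G ω j) (v j) P := by
  refine hasSubgaussianMGF_of_map_eq_gaussianReal (by fun_prop) ?_
  have heval := (measurePreserving_eval (fun j => gaussianReal 0 (v j)) j).map_eq
  rwa [← hmap, Measure.map_map (measurable_pi_apply j) hG] at heval

variable {c : ℝ≥0} {t : ℝ}

theorem integrable_meanExpSq (hG : ∀ j, HasSubgaussianMGF (fun ω => G ω j) c P) (ht : 0 ≤ t)
    (hct : c * t < 1 / 2) : Integrable (fun ω => meanExpSq t (G ω)) P :=
  (integrable_finsetSum _ fun j _ =>
    integrable_exp_mul_sq_of_hasSubgaussianMGF (hG j) ht hct).div_const _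

theorem integral_meanExpSq_le (hG : ∀ j, HasSubgaussianMGF (fun ω => G ω j) c P) (ht : 0 ≤ t)
    (hct : c * t < 1 / 2) :
    ∫ ω, meanExpSq t (G ω) ∂P ≤ (√(1 - 2 * (c * t)))⁻¹ := by
  simp only [meanExpSq]
  rw [integral_div, integral_finsetSum _ fun j _ =>
    integrable_exp_mul_sq_of_hasSubgaussianMGF (hG j) ht hct]
  refine div_le_of_le_mul₀ d.cast_nonneg (by positivity) ?_
  calc ∑ j, ∫ ω, Real.exp (t * G ω j ^ 2) ∂P ≤ ∑ _j : Fin d, (√(1 - 2 * (c * t)))⁻¹ :=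
        Finset.sum_le_sum fun j _ => integral_exp_mul_sq_le_of_hasSubgaussianMGF (hG j) ht hct
    _ = (√(1 - 2 * (c * t)))⁻¹ * d := by simp [mul_comm]

theorem integral_slopeWidth_le {β : Fin d → ℝ} (hβ : ∀ i, 0 ≤ β i) (hc : 0 < c)
    (hG : ∀ j, HasSubgaussianMGF (fun ω => G ω j) c P) {ρ r M : ℝ} (hρ : 0 ≤ ρ) (hr : 0 ≤ r)
    (hM : 0 ≤ M) {m : ℕ} (hmd : m ≤ d)
    (hβM : ∀ i : Fin d, m ≤ i → √(logRatio d (i + 1)) ≤ M * β i) :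
    ∫ ω, slopeWidth β ρ r (G ω) ∂P ≤ 4 * √c * (r * √(m * logRatio d m) + ρ * M) := by
  set D : ℝ := r * √(m * logRatio d m) + ρ * M
  set t : ℝ := (4 * c)⁻¹ with ht_def
  have ht : 0 < t := by positivity
  have hct : c * t = 1 / 4 := by rw [ht_def]; field_simp
  have hct' : c * t < 1 / 2 := by norm_num [hct]
  have hsqrt_t : √t = (2 * √c)⁻¹ := by
    rw [ht_def, Real.sqrt_inv, Real.sqrt_mul zero_le_four]
    norm_num
  calc ∫ ω, slopeWidth β ρ r (G ω) ∂P
      ≤ ∫ ω, meanExpSq t (G ω) / √t * (√2 * D) ∂P :=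
        integral_mono_of_nonneg (.of_forall fun ω => slopeWidth_nonneg β hρ hr (G ω))
          (((integrable_meanExpSq hG ht.le hct').div_const _).mul_const _)
          (.of_forall fun ω => slopeWidth_le_meanExpSq_mul hβ hρ hr ht hM hmd hβM (G ω))
    _ = (∫ ω, meanExpSq t (G ω) ∂P) / √t * (√2 * D) := by
        rw [integral_mul_const, integral_div]
    _ ≤ (√(1 - 2 * (c * t)))⁻¹ / √t * (√2 * D) := by
        gcongr
        exact integral_meanExpSq_le hG ht.le hct'
    _ = 4 * √c * D := by
        have hsqrt2 : (√(1 - 2 * (c * t)))⁻¹ = √2 := by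
          rw [hct, ← Real.sqrt_inv]
          norm_num
        rw [hsqrt2, hsqrt_t, div_inv_eq_mul]
        linear_combination 2 * √c * D * Real.mul_self_sqrt zero_le_two

end SubgaussianVector

theorem stmt6_general {d : ℕ} {β : Fin d → ℝ} (hβ : ∀ i, 0 < β i) {Ω : Type*} [MeasurableSpace Ω]
    {P : Measure Ω} {G : Ω → Fin d → ℝ} {c : ℝ≥0} (hc : 0 < c)
    (hG : ∀ j, HasSubgaussianMGF (fun ω => G ω j) c P) {ρ r : ℝ} (hρ : 0 ≤ ρ) (hr : 0 ≤ r)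
    {k : ℕ} (hk : 1 ≤ k) (hkd : k ≤ d) :
    (∫ ω, sSup ((fun w => iprod (G ω) w) ''
        {w : Fin d → ℝ | slopeNorm β w ≤ ρ ∧ l2norm w ≤ r}) ∂P) ≤
      4 * √c * (r * √(((k : ℝ) - 1) * logRatio d (k - 1)) +
        ρ * ⨆ i : {i : Fin d // k ≤ (i : ℕ) + 1}, √(logRatio d (i.1 + 1)) / β i.1) := by
  set f : {i : Fin d // k ≤ (i : ℕ) + 1} → ℝ := fun i => √(logRatio d (i.1 + 1)) / β i.1
  have hsup : 0 ≤ ⨆ i, f i := Real.iSup_nonneg fun i => div_nonneg (Real.sqrt_nonneg _) (hβ _).le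
  have htail (i : Fin d) (hi : k - 1 ≤ i) : √(logRatio d (i + 1)) ≤ (⨆ i, f i) * β i :=
    (div_le_iff₀ (hβ i)).mp
      (le_ciSup (f := f) (Set.finite_range f).bddAbove ⟨i, by omega⟩)
  have hwidth := integral_slopeWidth_le (fun i => (hβ i).le) hc hG hρ hr hsup
    (by omega : k - 1 ≤ d) htail
  rwa [Nat.cast_pred hk] at hwidth

/-- Lemma 5.3: for the SLOPE norm with nonincreasing positive weights and a
standard Gaussian vector `G` in `ℝ^d`, for every `k ∈ {1, …, d}`,
`𝔼 sup{⟨G,w⟩ : Ψ(w) ≤ ρ, ‖w‖₂ ≤ r} ≤ C (r √((k-1) log(ed/(k-1))) + ρ max_{k ≤ i ≤ d} √(log(ed/i))/β_i)`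
(for `k = 1` the first term is `0`; here the index `i` of `β` is `1`-based, so the
`0`-based index `i : Fin d` corresponds to the `1`-based index `(i : ℕ) + 1`). -/
theorem stmt6 : ∃ C : ℝ, 0 < C ∧
    ∀ (d : ℕ) (β : Fin d → ℝ), Antitone β → (∀ i, 0 < β i) →
    ∀ (Ω : Type) [MeasurableSpace Ω] (P : Measure Ω) [IsProbabilityMeasure P],
    ∀ G : Ω → Fin d → ℝ, Measurable G →
    P.map G = Measure.pi (fun _ : Fin d => gaussianReal 0 1) →
    ∀ ρ r : ℝ, 0 < ρ → 0 < r →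
    ∀ k : ℕ, 1 ≤ k → k ≤ d →
    (∫ ω, sSup ((fun w => iprod (G ω) w) ''
        {w : Fin d → ℝ | slopeNorm β w ≤ ρ ∧ l2norm w ≤ r}) ∂P) ≤
      C * (r * Real.sqrt (((k : ℝ) - 1) *
            Real.log (Real.exp 1 * (d : ℝ) / ((k : ℝ) - 1))) +
        ρ * ⨆ i : {i : Fin d // k ≤ (i : ℕ) + 1},
          Real.sqrt (Real.log (Real.exp 1 * (d : ℝ) / ((i.1 : ℕ) + 1))) / β i.1) := by
  refine ⟨4, by norm_num, fun d β _ hβ Ω _ P _ G hG hmap ρ r hρ hr k hk hkd => ?_⟩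
  have hsubgaussian := hasSubgaussianMGF_apply_of_map_eq_pi_gaussianReal hG hmap
  simpa [logRatio] using stmt6_general hβ one_pos hsubgaussian hρ.le hr.le hk hkd
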